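/- Let y* be the maximum of q*_η over all measures η. A measure ξ is universally optimal if and only if for every generalized inverse G of C_{ξ11} one has C_{ξ00} − C_{ξ01}GC_{ξ10} = y* · B_t/(t−1). -/

import Mathlib

open Matrix

namespace TwoDim

/-- The set of plots of an `a × b` block. -/
abbrev Plot (a b : ℕ) := Fin a × Fin b

/-- A block array: an assignment of one of `t` treatments to each plot. -/
abbrev BlockArray (a b t : ℕ) := Plot a b → Fin t

/-- The all-ones matrix. -/
def Jmat (n : Type*) : Matrix n n ℝ := Matrix.of fun _ _ => 1

/-- `B_m = I - J/m`. -/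
noncomputable def Bmat (n : Type*) [Fintype n] [DecidableEq n] : Matrix n n ℝ :=
  1 - ((Fintype.card n : ℝ))⁻¹ • Jmat n

variable {a b t : ℕ}

/-- The treatment incidence matrix `T_s`. -/
def Tmat (s : BlockArray a b t) : Matrix (Plot a b) (Fin t) ℝ :=
  Matrix.of fun q k => if s q = k then 1 else 0

/-- Two plots are neighbors if they agree in one coordinate and differ by 1 in the other. -/
def Neighbor (q r : Plot a b) : Prop :=
  (q.1 = r.1 ∧ (q.2.val + 1 = r.2.val ∨ r.2.val + 1 = q.2.val)) ∨
  (q.2 = r.2 ∧ (q.1.val + 1 = r.1.val ∨ r.1.val + 1 = q.1.val))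

instance (q r : Plot a b) : Decidable (Neighbor q r) := by
  unfold Neighbor; infer_instance

/-- The adjacency matrix of the neighbor relation. -/
def Mmat (a b : ℕ) : Matrix (Plot a b) (Plot a b) ℝ :=
  Matrix.of fun q r => if Neighbor q r then 1 else 0

/-- `F_s = M T_s`. -/
def Fmat (s : BlockArray a b t) : Matrix (Plot a b) (Fin t) ℝ :=
  Mmat a b * Tmat s

/-- `B̃ = Σ⁻¹ − Σ⁻¹ J Σ⁻¹ / (1'Σ⁻¹1)`. -/
noncomputable def Btilde (Sig : Matrix (Plot a b) (Plot a b) ℝ) :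
    Matrix (Plot a b) (Plot a b) ℝ :=
  Sig⁻¹ - (∑ i, ∑ j, Sig⁻¹ i j)⁻¹ • (Sig⁻¹ * Jmat (Plot a b) * Sig⁻¹)

/-- `C_{s00} = T_s' W T_s` (with `W` playing the role of `B̃`). -/
def Cs00 (W : Matrix (Plot a b) (Plot a b) ℝ) (s : BlockArray a b t) :
    Matrix (Fin t) (Fin t) ℝ := (Tmat s)ᵀ * W * Tmat s

/-- `C_{s01} = T_s' W F_s`. -/
def Cs01 (W : Matrix (Plot a b) (Plot a b) ℝ) (s : BlockArray a b t) :
    Matrix (Fin t) (Fin t) ℝ := (Tmat s)ᵀ * W * Fmat s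

/-- `C_{s11} = F_s' W F_s`. -/
def Cs11 (W : Matrix (Plot a b) (Plot a b) ℝ) (s : BlockArray a b t) :
    Matrix (Fin t) (Fin t) ℝ := (Fmat s)ᵀ * W * Fmat s

/-- `c_{s00} = tr(B_t C_{s00})`. -/
noncomputable def cs00 (W : Matrix (Plot a b) (Plot a b) ℝ) (s : BlockArray a b t) : ℝ :=
  Matrix.trace (Bmat (Fin t) * Cs00 W s)

noncomputable def cs01 (W : Matrix (Plot a b) (Plot a b) ℝ) (s : BlockArray a b t) : ℝ :=
  Matrix.trace (Bmat (Fin t) * Cs01 W s)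

noncomputable def cs11 (W : Matrix (Plot a b) (Plot a b) ℝ) (s : BlockArray a b t) : ℝ :=
  Matrix.trace (Bmat (Fin t) * Cs11 W s)

/-- The quadratic `q_s(x) = c_{s00} + 2 c_{s01} x + c_{s11} x²`. -/
noncomputable def qpoly (W : Matrix (Plot a b) (Plot a b) ℝ) (s : BlockArray a b t) (x : ℝ) : ℝ :=
  cs00 W s + 2 * cs01 W s * x + cs11 W s * x ^ 2

/-- A measure on the set of block arrays: nonnegative weights summing to one. -/
def IsMeasure (ξ : BlockArray a b t → ℝ) : Prop :=
  (∀ s, 0 ≤ ξ s) ∧ ∑ s, ξ s = 1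

noncomputable def Cm00 (W : Matrix (Plot a b) (Plot a b) ℝ) (ξ : BlockArray a b t → ℝ) :
    Matrix (Fin t) (Fin t) ℝ := ∑ s, ξ s • Cs00 W s

noncomputable def Cm01 (W : Matrix (Plot a b) (Plot a b) ℝ) (ξ : BlockArray a b t → ℝ) :
    Matrix (Fin t) (Fin t) ℝ := ∑ s, ξ s • Cs01 W s

noncomputable def Cm11 (W : Matrix (Plot a b) (Plot a b) ℝ) (ξ : BlockArray a b t → ℝ) :
    Matrix (Fin t) (Fin t) ℝ := ∑ s, ξ s • Cs11 W s

noncomputable def cm00 (W : Matrix (Plot a b) (Plot a b) ℝ) (ξ : BlockArray a b t → ℝ) : ℝ :=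
  ∑ s, ξ s * cs00 W s

noncomputable def cm01 (W : Matrix (Plot a b) (Plot a b) ℝ) (ξ : BlockArray a b t → ℝ) : ℝ :=
  ∑ s, ξ s * cs01 W s

noncomputable def cm11 (W : Matrix (Plot a b) (Plot a b) ℝ) (ξ : BlockArray a b t → ℝ) : ℝ :=
  ∑ s, ξ s * cs11 W s

/-- `q*_ξ = c_{ξ00} − c_{ξ01}²/c_{ξ11}`. -/
noncomputable def qstar (W : Matrix (Plot a b) (Plot a b) ℝ) (ξ : BlockArray a b t → ℝ) : ℝ :=
  cm00 W ξ - (cm01 W ξ) ^ 2 / cm11 W ξ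

/-- `G` is a generalized inverse of `A`. -/
def IsGenInv (A G : Matrix (Fin t) (Fin t) ℝ) : Prop := A * G * A = A

/-- Information matrix `C_{ξ00} − C_{ξ01} G C_{ξ10}` computed with a generalized inverse `G`. -/
noncomputable def InfoMat (W : Matrix (Plot a b) (Plot a b) ℝ) (ξ : BlockArray a b t → ℝ)
    (G : Matrix (Fin t) (Fin t) ℝ) : Matrix (Fin t) (Fin t) ℝ :=
  Cm00 W ξ - Cm01 W ξ * G * (Cm01 W ξ)ᵀ

/-- A criterion `Φ` on `t×t` real symmetric matrices: concave, Loewner-nondecreasing, and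
invariant under simultaneous permutations of rows and columns. -/
def GoodPhi (t : ℕ) (Φ : Matrix (Fin t) (Fin t) ℝ → ℝ) : Prop :=
  (∀ A B : Matrix (Fin t) (Fin t) ℝ, A.IsSymm → B.IsSymm → ∀ α : ℝ, 0 ≤ α → α ≤ 1 →
      α * Φ A + (1 - α) * Φ B ≤ Φ (α • A + (1 - α) • B)) ∧
  (∀ A B : Matrix (Fin t) (Fin t) ℝ, A.IsSymm → B.IsSymm → (B - A).PosSemidef → Φ A ≤ Φ B) ∧
  (∀ (σ : Equiv.Perm (Fin t)) (C : Matrix (Fin t) (Fin t) ℝ), Φ (C.submatrix σ σ) = Φ C)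

/-- Universal optimality of a measure `ξ`. -/
def UnivOptimal (W : Matrix (Plot a b) (Plot a b) ℝ) (ξ : BlockArray a b t → ℝ) : Prop :=
  ∀ η : BlockArray a b t → ℝ, IsMeasure η →
    ∀ G H : Matrix (Fin t) (Fin t) ℝ, IsGenInv (Cm11 W ξ) G → IsGenInv (Cm11 W η) H →
      ∀ Φ : Matrix (Fin t) (Fin t) ℝ → ℝ, GoodPhi t Φ →
        Φ (InfoMat W η H) ≤ Φ (InfoMat W ξ G)

/-- A measure is symmetric if it is invariant under relabeling of the treatments. -/
def IsSymmetricMeasure (ξ : BlockArray a b t → ℝ) : Prop :=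
  ∀ (σ : Equiv.Perm (Fin t)) (s : BlockArray a b t), ξ (fun q => σ (s q)) = ξ s

/-- A matrix is completely symmetric if it is of the form `αI + βJ`. -/
def ComplSym (A : Matrix (Fin t) (Fin t) ℝ) : Prop :=
  ∃ α β : ℝ, A = α • (1 : Matrix (Fin t) (Fin t) ℝ) + β • Jmat (Fin t)

/-- A measure is pseudo symmetric if `C_{ξ00}`, `C_{ξ01}`, `C_{ξ11}` are completely symmetric. -/
def PseudoSym (W : Matrix (Plot a b) (Plot a b) ℝ) (ξ : BlockArray a b t → ℝ) : Prop :=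
  ComplSym (Cm00 W ξ) ∧ ComplSym (Cm01 W ξ) ∧ ComplSym (Cm11 W ξ)

/-- `r(x) = max_{s∈S} q_s(x)`. -/
noncomputable def rfun {a b : ℕ} (t : ℕ) (W : Matrix (Plot a b) (Plot a b) ℝ) (x : ℝ) : ℝ :=
  sSup (Set.range fun s : BlockArray a b t => qpoly W s x)

/-- `min_{s∈S} q_s(x)`. -/
noncomputable def rmin {a b : ℕ} (t : ℕ) (W : Matrix (Plot a b) (Plot a b) ℝ) (x : ℝ) : ℝ :=
  sInf (Set.range fun s : BlockArray a b t => qpoly W s x)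

/-- Number of plots assigned treatment `k` by `s`. -/
noncomputable def f0 (s : BlockArray a b t) (k : Fin t) : ℕ :=
  {q : Plot a b | s q = k}.ncard

/-- Replications of `k` among the columns `1,…,b−1`. -/
noncomputable def f1 (s : BlockArray a b t) (k : Fin t) : ℕ :=
  {q : Plot a b | s q = k ∧ q.2.val + 1 < b}.ncard

/-- Replications of `k` among the columns `2,…,b`. -/
noncomputable def f2 (s : BlockArray a b t) (k : Fin t) : ℕ :=
  {q : Plot a b | s q = k ∧ 1 ≤ q.2.val}.ncard

/-- Replications of `k` among the rows `1,…,a−1`. -/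
noncomputable def f3 (s : BlockArray a b t) (k : Fin t) : ℕ :=
  {q : Plot a b | s q = k ∧ q.1.val + 1 < a}.ncard

/-- Replications of `k` among the rows `2,…,a`. -/
noncomputable def f4 (s : BlockArray a b t) (k : Fin t) : ℕ :=
  {q : Plot a b | s q = k ∧ 1 ≤ q.1.val}.ncard

noncomputable def fc (s : BlockArray a b t) : ℕ → Fin t → ℕ
  | 0 => f0 s
  | 1 => f1 s
  | 2 => f2 s
  | 3 => f3 s
  | 4 => f4 s
  | _ => fun _ => 0

/-- `h^{uv}_s = Σ_k f^u_{s,k} f^v_{s,k}`. -/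
noncomputable def hval (s : BlockArray a b t) (u v : ℕ) : ℝ :=
  ∑ k : Fin t, (fc s u k : ℝ) * (fc s v k : ℝ)

noncomputable def h00 (s : BlockArray a b t) : ℝ := hval s 0 0

noncomputable def h1 (s : BlockArray a b t) : ℝ :=
  hval s 0 1 + hval s 0 2 + hval s 0 3 + hval s 0 4

noncomputable def h2 (s : BlockArray a b t) : ℝ :=
  hval s 1 1 + hval s 2 2 + hval s 3 3 + hval s 4 4

noncomputable def h3 (s : BlockArray a b t) : ℝ :=
  hval s 1 2 + hval s 1 3 + hval s 1 4 + hval s 2 3 + hval s 2 4 + hval s 3 4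

/-- `z¹_{s,r}`: horizontally adjacent pairs of plots receiving the same treatment. -/
noncomputable def zr1 (s : BlockArray a b t) : ℕ :=
  {qr : Plot a b × Plot a b |
    qr.1.1 = qr.2.1 ∧ qr.1.2.val + 1 = qr.2.2.val ∧ s qr.1 = s qr.2}.ncard

noncomputable def zr2 (s : BlockArray a b t) : ℕ :=
  {qr : Plot a b × Plot a b |
    qr.1.1 = qr.2.1 ∧ qr.1.2.val + 2 = qr.2.2.val ∧ s qr.1 = s qr.2}.ncard

noncomputable def zc1 (s : BlockArray a b t) : ℕ :=
  {qr : Plot a b × Plot a b |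
    qr.1.2 = qr.2.2 ∧ qr.1.1.val + 1 = qr.2.1.val ∧ s qr.1 = s qr.2}.ncard

noncomputable def zc2 (s : BlockArray a b t) : ℕ :=
  {qr : Plot a b × Plot a b |
    qr.1.2 = qr.2.2 ∧ qr.1.1.val + 2 = qr.2.1.val ∧ s qr.1 = s qr.2}.ncard

/-- pairs `(i,j)`, `(i−1,j+1)` with the same treatment. -/
noncomputable def zd1 (s : BlockArray a b t) : ℕ :=
  {qr : Plot a b × Plot a b |
    qr.2.1.val + 1 = qr.1.1.val ∧ qr.1.2.val + 1 = qr.2.2.val ∧ s qr.1 = s qr.2}.ncard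

/-- pairs `(i,j)`, `(i+1,j+1)` with the same treatment. -/
noncomputable def zd2 (s : BlockArray a b t) : ℕ :=
  {qr : Plot a b × Plot a b |
    qr.1.1.val + 1 = qr.2.1.val ∧ qr.1.2.val + 1 = qr.2.2.val ∧ s qr.1 = s qr.2}.ncard

noncomputable def z1 (s : BlockArray a b t) : ℝ := 2 * zr1 s + 2 * zc1 s

noncomputable def z2 (s : BlockArray a b t) : ℝ :=
  2 * zr2 s + 2 * zc2 s + 4 * zd1 s + 4 * zd2 s

/-- `η = 4p − 2a − 2b − 2(8ab − 7a − 7b + 4)/t + 4(2p − a − b)²/(pt)` where `p = ab`. -/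
noncomputable def eta (a b t : ℕ) : ℝ :=
  4 * ((a : ℝ) * b) - 2 * a - 2 * b - 2 * (8 * (a : ℝ) * b - 7 * a - 7 * b + 4) / t +
    4 * (2 * (a : ℝ) * b - a - b) ^ 2 / (((a : ℝ) * b) * t)

/-- A corner plot of the `a × b` block. -/
def IsCorner (q : Plot a b) : Prop :=
  (q.1.val = 0 ∨ q.1.val + 1 = a) ∧ (q.2.val = 0 ∨ q.2.val + 1 = b)

/-- Treatment `k` is significant in `s`: it occupies exactly two plots, which are
neighbors, at least one of them being a corner plot. -/
def Significant (s : BlockArray a b t) (k : Fin t) : Prop :=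
  ∃ u v : Plot a b, u ≠ v ∧ {q : Plot a b | s q = k} = {u, v} ∧
    Neighbor u v ∧ (IsCorner u ∨ IsCorner v)

/-- Treatment `k` is strictly significant in `s`: both of its two plots are corners. -/
def StrictSignificant (s : BlockArray a b t) (k : Fin t) : Prop :=
  ∃ u v : Plot a b, u ≠ v ∧ {q : Plot a b | s q = k} = {u, v} ∧
    Neighbor u v ∧ IsCorner u ∧ IsCorner v

/-- `Q_i`: block arrays with exactly `i` significant treatments in which every other
treatment appears at most once. -/
def Qset (a b t : ℕ) (i : ℕ) : Set (BlockArray a b t) :=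
  {s | {k : Fin t | Significant s k}.ncard = i ∧
       ∀ k : Fin t, ¬ Significant s k → f0 s k ≤ 1}

/-- `Q_j*`: members of `Q_j` whose significant treatments are all strictly significant. -/
def QsetStar (a b t : ℕ) (j : ℕ) : Set (BlockArray a b t) :=
  {s | s ∈ Qset a b t j ∧ ∀ k : Fin t, Significant s k → StrictSignificant s k}

/-- Treatment `k` is connected in `s`. -/
def ConnectedIn (s : BlockArray a b t) (k : Fin t) : Prop :=
  ∀ q r : Plot a b, s q = k → s r = k →
    Relation.ReflTransGen (fun u v => Neighbor u v ∧ s u = k ∧ s v = k) q r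

section Helpers

variable {a b t : ℕ}

lemma Jmat_eq_vecMulVec (n : Type*) : Jmat n = Matrix.vecMulVec (1 : n → ℝ) 1 := by
  ext i j; simp [Jmat, Matrix.vecMulVec_apply]

lemma J_P_J {n : Type*} [Fintype n] (P : Matrix n n ℝ) :
    Jmat n * P * Jmat n = (∑ i, ∑ j, P i j) • Jmat n := by
  ext i j
  simp only [Jmat, Matrix.mul_apply, Matrix.of_apply, one_mul, mul_one, Matrix.smul_apply,
    smul_eq_mul]
  rw [Finset.sum_comm]

lemma sum_entries_eq {n : Type*} [Fintype n] (P : Matrix n n ℝ) :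
    ∑ i, ∑ j, P i j = (1 : n → ℝ) ⬝ᵥ (P *ᵥ 1) := by
  simp [dotProduct, Matrix.mulVec]

lemma sum_inv_pos (ha : 0 < a) (hb : 0 < b) (Sig : Matrix (Plot a b) (Plot a b) ℝ)
    (hSig : Sig.PosDef) : 0 < ∑ i, ∑ j, Sig⁻¹ i j := by
  rw [sum_entries_eq]
  have h := hSig.inv.dotProduct_mulVec_pos (x := (1 : Plot a b → ℝ)) (by
    intro h
    have := congrFun h (⟨0, ha⟩, ⟨0, hb⟩)
    simp at this)
  simpa using h

lemma Btilde_posSemidef (ha : 0 < a) (hb : 0 < b) (Sig : Matrix (Plot a b) (Plot a b) ℝ)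
    (hSig : Sig.PosDef) : (Btilde Sig).PosSemidef := by
  have hc := (sum_inv_pos ha hb Sig hSig).ne'
  have hP := hSig.inv
  have hsym : (Sig⁻¹)ᵀ = Sig⁻¹ := by
    have := hP.isHermitian.eq
    rwa [conjTranspose_eq_transpose_of_trivial] at this
  have hJ : (Jmat (Plot a b))ᵀ = Jmat (Plot a b) := by ext i j; simp [Jmat]
  set P := Sig⁻¹ with hPdef
  set c := ∑ i, ∑ j, P i j with hcdef
  have key : Btilde Sig = (1 - c⁻¹ • (Jmat (Plot a b) * P))ᴴ * P *
      (1 - c⁻¹ • (Jmat (Plot a b) * P)) := by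
    rw [conjTranspose_eq_transpose_of_trivial]
    simp only [Matrix.transpose_sub, Matrix.transpose_one, Matrix.transpose_smul,
      Matrix.transpose_mul, hsym, hJ]
    simp only [Matrix.sub_mul, Matrix.mul_sub, Matrix.one_mul, Matrix.mul_one,
      Matrix.smul_mul, Matrix.mul_smul]
    have : P * Jmat (Plot a b) * P * (Jmat (Plot a b) * P) =
        c • (P * Jmat (Plot a b) * P) := by
      calc _ = P * (Jmat (Plot a b) * P * Jmat (Plot a b)) * P := by
            simp only [Matrix.mul_assoc]
        _ = _ := by rw [J_P_J]; simp [hcdef]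
    rw [this, smul_smul, inv_mul_cancel₀ hc, ← Matrix.mul_assoc, one_smul, sub_self, smul_zero,
      sub_zero]
    rfl
  rw [key]
  exact hP.posSemidef.conjTranspose_mul_mul_same _

lemma Btilde_mulVec_one (ha : 0 < a) (hb : 0 < b) (Sig : Matrix (Plot a b) (Plot a b) ℝ)
    (hSig : Sig.PosDef) : Btilde Sig *ᵥ 1 = 0 := by
  have hc := (sum_inv_pos ha hb Sig hSig).ne'
  unfold Btilde
  rw [Matrix.sub_mulVec, Matrix.smul_mulVec, ← Matrix.mulVec_mulVec, ← Matrix.mulVec_mulVec]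
  have : Jmat (Plot a b) *ᵥ (Sig⁻¹ *ᵥ 1) = (∑ i, ∑ j, Sig⁻¹ i j) • 1 := by
    rw [sum_entries_eq]
    ext i
    simp [Jmat, Matrix.mulVec, dotProduct]
  rw [this, Matrix.mulVec_smul, smul_smul, inv_mul_cancel₀ hc, one_smul, sub_self]

/-! ### Algebra of `B` and `J` -/

lemma J_mul_J : Jmat (Fin t) * Jmat (Fin t) = (t : ℝ) • Jmat (Fin t) := by
  ext i j; simp [Jmat, Matrix.mul_apply]

lemma B_mul_J (ht : 2 ≤ t) : Bmat (Fin t) * Jmat (Fin t) = 0 := by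
  have : (t : ℝ) ≠ 0 := by positivity
  simp [Bmat, Matrix.sub_mul, J_mul_J, smul_smul, this]

lemma J_mul_B (ht : 2 ≤ t) : Jmat (Fin t) * Bmat (Fin t) = 0 := by
  have : (t : ℝ) ≠ 0 := by positivity
  simp [Bmat, Matrix.mul_sub, J_mul_J, smul_smul, this]

lemma B_mul_B (ht : 2 ≤ t) : Bmat (Fin t) * Bmat (Fin t) = Bmat (Fin t) := by
  have h : Bmat (Fin t) * (1 - ((Fintype.card (Fin t) : ℝ))⁻¹ • Jmat (Fin t)) = Bmat (Fin t) := by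
    rw [Matrix.mul_sub, Matrix.mul_smul, B_mul_J ht]; simp
  exact h

lemma B_transpose : (Bmat (Fin t))ᵀ = Bmat (Fin t) := by
  ext i j; simp [Bmat, Jmat, Matrix.one_apply, eq_comm]

lemma B_posSemidef (ht : 2 ≤ t) : (Bmat (Fin t)).PosSemidef := by
  have h := Matrix.posSemidef_conjTranspose_mul_self (Bmat (Fin t))
  rwa [conjTranspose_eq_transpose_of_trivial, B_transpose, B_mul_B ht] at h

lemma B_trace (ht : 2 ≤ t) : (Bmat (Fin t)).trace = (t : ℝ) - 1 := by
  have : (t : ℝ) ≠ 0 := by positivity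
  simp [Bmat, Jmat, Matrix.trace, Finset.sum_sub_distrib, this]

lemma B_submatrix (σ : Equiv.Perm (Fin t)) : (Bmat (Fin t)).submatrix σ σ = Bmat (Fin t) := by
  ext i j; simp [Bmat, Jmat, Matrix.one_apply]

lemma trace_J : (Jmat (Fin t)).trace = t := by simp [Jmat, Matrix.trace]

/-- A permutation-invariant matrix is a combination of `B` and `J`. -/
lemma exists_of_invariant (ht : 2 ≤ t) (A : Matrix (Fin t) (Fin t) ℝ)
    (hA : ∀ σ : Equiv.Perm (Fin t), A.submatrix σ σ = A) :
    ∃ γ δ : ℝ, A = γ • Bmat (Fin t) + δ • Jmat (Fin t) := by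
  have htr : (t : ℝ) ≠ 0 := by positivity
  have hA' : ∀ (σ : Equiv.Perm (Fin t)) i j, A (σ i) (σ j) = A i j := fun σ i j =>
    congrFun (congrFun (hA σ) i) j
  let i0 : Fin t := ⟨0, by omega⟩
  let i1 : Fin t := ⟨1, by omega⟩
  have h01 : i0 ≠ i1 := by simp [i0, i1, Fin.ext_iff]
  have hd : ∀ i, A i i = A i0 i0 := fun i => by
    simpa using hA' (Equiv.swap i0 i) i0 i0
  have ho : ∀ i j, i ≠ j → A i j = A i0 i1 := by
    intro i j hij
    set τ := Equiv.swap i0 i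
    have h1 : τ i0 = i := Equiv.swap_apply_left _ _
    set k := τ i1
    have hk : k ≠ i := fun h => h01 (τ.injective (h1.trans h.symm))
    have h := hA' (τ.trans (Equiv.swap k j)) i0 i1
    have e0 : (τ.trans (Equiv.swap k j)) i0 = i := by
      rw [Equiv.trans_apply, h1]
      exact Equiv.swap_apply_of_ne_of_ne hk.symm hij
    have e1 : (τ.trans (Equiv.swap k j)) i1 = j := by
      rw [Equiv.trans_apply]
      exact Equiv.swap_apply_left _ _
    rwa [e0, e1] at h
  refine ⟨A i0 i0 - A i0 i1, A i0 i1 + (A i0 i0 - A i0 i1) / t, ?_⟩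
  ext i j
  by_cases hij : i = j
  · subst hij
    rw [hd]
    simp [Bmat, Jmat]
    field_simp
    ring
  · rw [ho i j hij]
    simp [Bmat, Jmat, hij]
    field_simp
    ring

lemma trace_B_mul_comb (ht : 2 ≤ t) (γ δ : ℝ) :
    (Bmat (Fin t) * (γ • Bmat (Fin t) + δ • Jmat (Fin t))).trace = γ * ((t : ℝ) - 1) := by
  rw [Matrix.mul_add, Matrix.mul_smul, Matrix.mul_smul, B_mul_J ht, B_mul_B ht, smul_zero,
    add_zero, Matrix.trace_smul, B_trace ht, smul_eq_mul]

lemma J_mul_comb (ht : 2 ≤ t) (γ δ : ℝ)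
    (h : Jmat (Fin t) * (γ • Bmat (Fin t) + δ • Jmat (Fin t)) = 0) : δ = 0 := by
  have htr : (t : ℝ) ≠ 0 := by positivity
  rw [Matrix.mul_add, Matrix.mul_smul, Matrix.mul_smul, J_mul_B ht, J_mul_J, smul_zero,
    zero_add] at h
  have := congrFun (congrFun h ⟨0, by omega⟩) ⟨0, by omega⟩
  simpa [Jmat, htr] using this

lemma trace_submatrix_perm (σ : Equiv.Perm (Fin t)) (A : Matrix (Fin t) (Fin t) ℝ) :
    (A.submatrix σ σ).trace = A.trace := by
  simp only [Matrix.trace, Matrix.diag, Matrix.submatrix_apply]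
  exact Equiv.sum_comp σ fun i => A i i

lemma trace_B_submatrix (σ : Equiv.Perm (Fin t)) (A : Matrix (Fin t) (Fin t) ℝ) :
    (Bmat (Fin t) * A.submatrix σ σ).trace = (Bmat (Fin t) * A).trace := by
  conv_lhs => rw [← B_submatrix σ, Matrix.submatrix_mul_equiv]
  exact trace_submatrix_perm σ _

/-! ### Relabeling -/

lemma Tmat_perm (σ : Equiv.Perm (Fin t)) (s : BlockArray a b t) :
    Tmat (fun q => σ (s q)) = (Tmat s).submatrix id σ.symm := by
  ext q k; simp [Tmat, Equiv.eq_symm_apply]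

lemma Fmat_perm (σ : Equiv.Perm (Fin t)) (s : BlockArray a b t) :
    Fmat (fun q => σ (s q)) = (Fmat s).submatrix id σ.symm := by
  unfold Fmat; rw [Tmat_perm]; ext q k; simp [Matrix.mul_apply]

lemma Cs00_perm (W : Matrix (Plot a b) (Plot a b) ℝ) (σ : Equiv.Perm (Fin t))
    (s : BlockArray a b t) :
    Cs00 W (fun q => σ (s q)) = (Cs00 W s).submatrix σ.symm σ.symm := by
  unfold Cs00; rw [Tmat_perm]; ext q k; simp [Matrix.mul_apply]

lemma Cs01_perm (W : Matrix (Plot a b) (Plot a b) ℝ) (σ : Equiv.Perm (Fin t))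
    (s : BlockArray a b t) :
    Cs01 W (fun q => σ (s q)) = (Cs01 W s).submatrix σ.symm σ.symm := by
  unfold Cs01; rw [Tmat_perm, Fmat_perm]; ext q k; simp [Matrix.mul_apply]

lemma Cs11_perm (W : Matrix (Plot a b) (Plot a b) ℝ) (σ : Equiv.Perm (Fin t))
    (s : BlockArray a b t) :
    Cs11 W (fun q => σ (s q)) = (Cs11 W s).submatrix σ.symm σ.symm := by
  unfold Cs11; rw [Fmat_perm]; ext q k; simp [Matrix.mul_apply]

/-- relabeling as an equivalence of block arrays -/
def permArr (a b : ℕ) (σ : Equiv.Perm (Fin t)) : BlockArray a b t ≃ BlockArray a b t where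
  toFun s := fun q => σ (s q)
  invFun s := fun q => σ.symm (s q)
  left_inv s := by ext q; simp
  right_inv s := by ext q; simp

/-- symmetrized measure -/
noncomputable def symmetrize (η : BlockArray a b t → ℝ) : BlockArray a b t → ℝ := fun s =>
  ((Fintype.card (Equiv.Perm (Fin t)) : ℝ))⁻¹ * ∑ σ : Equiv.Perm (Fin t), η (fun q => σ (s q))

lemma card_perm_ne : (Fintype.card (Equiv.Perm (Fin t)) : ℝ) ≠ 0 := by
  exact_mod_cast Fintype.card_ne_zero

lemma symmetrize_sum (η : BlockArray a b t → ℝ) (c : BlockArray a b t → ℝ)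
    (hc : ∀ (σ : Equiv.Perm (Fin t)) s, c (fun q => σ (s q)) = c s) :
    ∑ s, symmetrize η s * c s = ∑ s, η s * c s := by
  have h1 : ∀ σ : Equiv.Perm (Fin t), ∑ s, η (fun q => σ (s q)) * c s = ∑ s, η s * c s := by
    intro σ
    rw [← Equiv.sum_comp (permArr a b σ) fun s => η s * c s]
    refine Finset.sum_congr rfl fun s _ => ?_
    change _ = η (fun q => σ (s q)) * c (fun q => σ (s q))
    rw [hc]
  have h2 : ∑ s, symmetrize η s * c s = ((Fintype.card (Equiv.Perm (Fin t)) : ℝ))⁻¹ *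
      ∑ σ : Equiv.Perm (Fin t), ∑ s, η (fun q => σ (s q)) * c s := by
    rw [Finset.sum_comm, Finset.mul_sum]
    refine Finset.sum_congr rfl fun s _ => ?_
    rw [symmetrize, mul_assoc, Finset.sum_mul]
  rw [h2, Finset.sum_congr rfl fun σ _ => h1 σ, Finset.sum_const, Finset.card_univ, nsmul_eq_mul,
    ← mul_assoc, inv_mul_cancel₀ card_perm_ne, one_mul]

lemma symmetrize_isMeasure {η : BlockArray a b t → ℝ} (h : IsMeasure η) :
    IsMeasure (symmetrize η) := by
  refine ⟨fun s => mul_nonneg (by positivity) (Finset.sum_nonneg fun σ _ => h.1 _), ?_⟩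
  have := symmetrize_sum η (fun _ => 1) (fun _ _ => rfl)
  simpa [h.2] using this

lemma symmetrize_perm (η : BlockArray a b t → ℝ) (τ : Equiv.Perm (Fin t))
    (s : BlockArray a b t) : symmetrize η (fun q => τ (s q)) = symmetrize η s := by
  unfold symmetrize
  congr 1
  exact Equiv.sum_comp (Equiv.mulRight τ) fun σ : Equiv.Perm (Fin t) => η (fun q => σ (s q))

lemma symm_invariant (η : BlockArray a b t → ℝ)
    (C : BlockArray a b t → Matrix (Fin t) (Fin t) ℝ)
    (hC : ∀ (σ : Equiv.Perm (Fin t)) s,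
      C (fun q => σ (s q)) = (C s).submatrix σ.symm σ.symm)
    (τ : Equiv.Perm (Fin t)) :
    (∑ s, symmetrize η s • C s).submatrix τ τ = ∑ s, symmetrize η s • C s := by
  have key : ∀ τ : Equiv.Perm (Fin t), ∑ s, symmetrize η s • C s =
      (∑ s, symmetrize η s • C s).submatrix τ.symm τ.symm := by
    intro τ
    have e : ∑ s, symmetrize η s • (C s).submatrix τ.symm τ.symm =
       (∑ s, symmetrize η s • C s).submatrix τ.symm τ.symm := by
      ext i j; simp [Matrix.sum_apply]
    rw [← e, ← Equiv.sum_comp (permArr a b τ) fun s => symmetrize η s • C s]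
    refine Finset.sum_congr rfl fun s _ => ?_
    change symmetrize η (fun q => τ (s q)) • C (fun q => τ (s q)) = _
    rw [symmetrize_perm, hC]
  exact (key τ.symm).symm

/-! ### Measures -/

lemma Tmat_mulVec_one (s : BlockArray a b t) : Tmat s *ᵥ 1 = 1 := by
  ext q; simp [Tmat, Matrix.mulVec, dotProduct]

lemma sum_submatrix_comb (ht : 2 ≤ t) (A : Matrix (Fin t) (Fin t) ℝ) (hA : Jmat (Fin t) * A = 0) :
    ∑ σ : Equiv.Perm (Fin t), ((Fintype.card (Equiv.Perm (Fin t)) : ℝ))⁻¹ • A.submatrix σ σ =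
      (A.trace / ((t : ℝ) - 1)) • Bmat (Fin t) := by
  have htr : (t : ℝ) - 1 ≠ 0 := by
    have : (2 : ℝ) ≤ t := by exact_mod_cast ht
    linarith
  set M := ∑ σ : Equiv.Perm (Fin t), ((Fintype.card (Equiv.Perm (Fin t)) : ℝ))⁻¹ • A.submatrix σ σ
    with hM
  have hinv : ∀ τ : Equiv.Perm (Fin t), M.submatrix τ τ = M := by
    intro τ
    have e : M.submatrix τ τ = ∑ σ : Equiv.Perm (Fin t),
        ((Fintype.card (Equiv.Perm (Fin t)) : ℝ))⁻¹ • A.submatrix (σ * τ) (σ * τ) := by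
      ext i j; simp [hM, Matrix.sum_apply]
    rw [e]
    exact Equiv.sum_comp (Equiv.mulRight τ) fun σ : Equiv.Perm (Fin t) =>
      ((Fintype.card (Equiv.Perm (Fin t)) : ℝ))⁻¹ • A.submatrix σ σ
  obtain ⟨γ, δ, h⟩ := exists_of_invariant ht M hinv
  have hJM : Jmat (Fin t) * M = 0 := by
    rw [hM, Matrix.mul_sum]
    refine Finset.sum_eq_zero fun σ _ => ?_
    have : Jmat (Fin t) * A.submatrix σ σ = (Jmat (Fin t) * A).submatrix σ σ := by
      conv_lhs => rw [show Jmat (Fin t) = (Jmat (Fin t)).submatrix σ σ from rfl,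
        Matrix.submatrix_mul_equiv]
    rw [Matrix.mul_smul, this, hA]; simp
  rw [h] at hJM
  have hδ := J_mul_comb ht γ δ hJM
  have htrM : M.trace = A.trace := by
    rw [hM, Matrix.trace_sum]
    simp only [Matrix.trace_smul, trace_submatrix_perm, Finset.sum_const, Finset.card_univ,
      nsmul_eq_mul, smul_eq_mul]
    rw [← mul_assoc, mul_inv_cancel₀ card_perm_ne, one_mul]
  rw [hδ, zero_smul, add_zero] at h
  rw [h, Matrix.trace_smul, B_trace ht, smul_eq_mul] at htrM
  rw [h, ← htrM, mul_div_assoc, div_self htr, mul_one]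

section W
variable {W : Matrix (Plot a b) (Plot a b) ℝ}

lemma W_symm (hW : W.PosSemidef) : Wᵀ = W := by
  have := hW.isHermitian.eq
  rwa [conjTranspose_eq_transpose_of_trivial] at this

lemma J_mul_of_vecMul {A : Matrix (Fin t) (Fin t) ℝ} (h : (1 : Fin t → ℝ) ᵥ* A = 0) :
    Jmat (Fin t) * A = 0 := by
  ext i j
  have := congrFun h j
  simpa [Jmat, Matrix.mul_apply, Matrix.vecMul, dotProduct] using this

lemma J_mul_TW (hW : W.PosSemidef) (h1 : W *ᵥ 1 = 0) (s : BlockArray a b t) :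
    Jmat (Fin t) * ((Tmat s)ᵀ * W) = 0 := by
  have h : (1 : Fin t → ℝ) ᵥ* ((Tmat s)ᵀ * W) = 0 := by
    rw [← Matrix.vecMul_vecMul, Matrix.vecMul_transpose, Tmat_mulVec_one,
      ← Matrix.mulVec_transpose, W_symm hW, h1]
  ext i j
  have := congrFun h j
  simpa [Jmat, Matrix.mul_apply, Matrix.vecMul, dotProduct] using this

lemma J_mul_Cm00 (hW : W.PosSemidef) (h1 : W *ᵥ 1 = 0) (η : BlockArray a b t → ℝ) :
    Jmat (Fin t) * Cm00 W η = 0 := by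
  rw [Cm00, Matrix.mul_sum]
  refine Finset.sum_eq_zero fun s _ => ?_
  rw [Matrix.mul_smul, Cs00, ← Matrix.mul_assoc, J_mul_TW hW h1, Matrix.zero_mul, smul_zero]

lemma J_mul_Cm01 (hW : W.PosSemidef) (h1 : W *ᵥ 1 = 0) (η : BlockArray a b t → ℝ) :
    Jmat (Fin t) * Cm01 W η = 0 := by
  rw [Cm01, Matrix.mul_sum]
  refine Finset.sum_eq_zero fun s _ => ?_
  rw [Matrix.mul_smul, Cs01, ← Matrix.mul_assoc, J_mul_TW hW h1, Matrix.zero_mul, smul_zero]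

lemma B_mul_of_J_mul {A : Matrix (Fin t) (Fin t) ℝ} (h : Jmat (Fin t) * A = 0) :
    Bmat (Fin t) * A = A := by
  rw [Bmat, Matrix.sub_mul, Matrix.smul_mul, h]; simp

lemma Cs11_posSemidef (hW : W.PosSemidef) (s : BlockArray a b t) : (Cs11 W s).PosSemidef := by
  have := hW.conjTranspose_mul_mul_same (Fmat s)
  rwa [conjTranspose_eq_transpose_of_trivial] at this

lemma Cm11_posSemidef (hW : W.PosSemidef) {η : BlockArray a b t → ℝ} (hη : IsMeasure η) :
    (Cm11 W η).PosSemidef :=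
  Matrix.posSemidef_sum _ fun s _ => (Cs11_posSemidef hW s).smul (hη.1 s)

lemma Cm00_symm (hW : W.PosSemidef) (η : BlockArray a b t → ℝ) :
    (Cm00 W η)ᵀ = Cm00 W η := by
  simp [Cm00, Cs00, Matrix.transpose_sum, Matrix.transpose_mul, W_symm hW, Matrix.mul_assoc]

lemma Cm11_symm (hW : W.PosSemidef) (η : BlockArray a b t → ℝ) :
    (Cm11 W η)ᵀ = Cm11 W η := by
  simp [Cm11, Cs11, Matrix.transpose_sum, Matrix.transpose_mul, W_symm hW, Matrix.mul_assoc]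

lemma ker_le (hW : W.PosSemidef) {η : BlockArray a b t → ℝ} (hη : IsMeasure η)
    (v : Fin t → ℝ) (hv : Cm11 W η *ᵥ v = 0) : Cm01 W η *ᵥ v = 0 := by
  have h0 : ∑ s, η s * (v ⬝ᵥ (Cs11 W s *ᵥ v)) = 0 := by
    have : v ⬝ᵥ (Cm11 W η *ᵥ v) = 0 := by rw [hv]; simp
    rw [Cm11, Matrix.sum_mulVec, dotProduct_sum] at this
    simpa [Matrix.smul_mulVec] using this
  have hnn : ∀ s ∈ Finset.univ, 0 ≤ η s * (v ⬝ᵥ (Cs11 W s *ᵥ v)) := fun s _ =>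
    mul_nonneg (hη.1 s) (by simpa using (Cs11_posSemidef hW s).dotProduct_mulVec_nonneg v)
  rw [Finset.sum_eq_zero_iff_of_nonneg hnn] at h0
  rw [Cm01, Matrix.sum_mulVec]
  refine Finset.sum_eq_zero fun s hs => ?_
  rw [Matrix.smul_mulVec]
  rcases mul_eq_zero.mp (h0 s hs) with h | h
  · rw [h, zero_smul]
  · have h2 : star (Fmat s *ᵥ v) ⬝ᵥ (W *ᵥ (Fmat s *ᵥ v)) = 0 := by
      rw [Cs11, ← Matrix.mulVec_mulVec, ← Matrix.mulVec_mulVec, Matrix.dotProduct_mulVec,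
        Matrix.vecMul_transpose] at h
      simpa using h
    rw [hW.dotProduct_mulVec_zero_iff] at h2
    rw [Cs01, ← Matrix.mulVec_mulVec, ← Matrix.mulVec_mulVec, h2]
    simp

lemma Cm01_factor (hW : W.PosSemidef) {η : BlockArray a b t → ℝ} (hη : IsMeasure η)
    {G : Matrix (Fin t) (Fin t) ℝ} (hG : IsGenInv (Cm11 W η) G) :
    Cm01 W η = (Cm01 W η * G) * Cm11 W η := by
  have h : Cm11 W η * (1 - G * Cm11 W η) = 0 := by
    rw [Matrix.mul_sub, ← Matrix.mul_assoc, hG, Matrix.mul_one, sub_self]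
  have h' : Cm01 W η * (1 - G * Cm11 W η) = 0 := by
    ext i j
    have hv : Cm11 W η *ᵥ (fun k => (1 - G * Cm11 W η) k j) = 0 := by
      ext k; exact congrFun (congrFun h k) j
    exact congrFun (ker_le hW hη _ hv) i
  rw [Matrix.mul_sub, Matrix.mul_one, sub_eq_zero, ← Matrix.mul_assoc] at h'
  exact h'

lemma InfoMat_eq (hW : W.PosSemidef) {η : BlockArray a b t → ℝ} (hη : IsMeasure η)
    {G : Matrix (Fin t) (Fin t) ℝ} (hG : IsGenInv (Cm11 W η) G) :
    InfoMat W η G = Cm00 W η - (Cm01 W η * G) * Cm11 W η * (Cm01 W η * G)ᵀ := by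
  have h := Cm01_factor hW hη hG
  set Y := Cm01 W η * G with hY
  have h' : (Cm01 W η)ᵀ = Cm11 W η * Yᵀ := by
    rw [h, Matrix.transpose_mul, Cm11_symm hW]
  rw [InfoMat, ← hY, h', Matrix.mul_assoc Y]

lemma InfoMat_symm (hW : W.PosSemidef) {η : BlockArray a b t → ℝ} (hη : IsMeasure η)
    {G : Matrix (Fin t) (Fin t) ℝ} (hG : IsGenInv (Cm11 W η) G) :
    (InfoMat W η G).IsSymm := by
  rw [InfoMat_eq hW hη hG, Matrix.IsSymm]
  simp only [Matrix.transpose_sub, Matrix.transpose_mul, Cm00_symm hW, Cm11_symm hW,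
    Matrix.transpose_transpose, Matrix.mul_assoc]

lemma J_mul_InfoMat (hW : W.PosSemidef) (h1 : W *ᵥ 1 = 0) (η : BlockArray a b t → ℝ)
    (G : Matrix (Fin t) (Fin t) ℝ) : Jmat (Fin t) * InfoMat W η G = 0 := by
  rw [InfoMat, Matrix.mul_sub, J_mul_Cm00 hW h1, ← Matrix.mul_assoc, ← Matrix.mul_assoc,
    J_mul_Cm01 hW h1]
  simp

lemma cm00_eq (W : Matrix (Plot a b) (Plot a b) ℝ) (η : BlockArray a b t → ℝ) :
    cm00 W η = (Bmat (Fin t) * Cm00 W η).trace := by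
  simp [cm00, Cm00, cs00, Matrix.mul_sum, Matrix.trace_sum]

lemma cm01_eq (W : Matrix (Plot a b) (Plot a b) ℝ) (η : BlockArray a b t → ℝ) :
    cm01 W η = (Bmat (Fin t) * Cm01 W η).trace := by
  simp [cm01, Cm01, cs01, Matrix.mul_sum, Matrix.trace_sum]

lemma cm11_eq (W : Matrix (Plot a b) (Plot a b) ℝ) (η : BlockArray a b t → ℝ) :
    cm11 W η = (Bmat (Fin t) * Cm11 W η).trace := by
  simp [cm11, Cm11, cs11, Matrix.mul_sum, Matrix.trace_sum]

lemma trace_InfoMat_le (ht : 2 ≤ t) (hW : W.PosSemidef) (h1 : W *ᵥ 1 = 0)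
    {η : BlockArray a b t → ℝ} (hη : IsMeasure η)
    {G : Matrix (Fin t) (Fin t) ℝ} (hG : IsGenInv (Cm11 W η) G) :
    (InfoMat W η G).trace ≤ qstar W η := by
  have hq : ∀ x : ℝ, (InfoMat W η G).trace ≤ cm00 W η + 2 * x * cm01 W η + x ^ 2 * cm11 W η := by
    intro x
    have hf := Cm01_factor hW hη hG
    have hI := InfoMat_eq hW hη hG
    set Y := Cm01 W η * G with hY
    set B := Bmat (Fin t) with hB
    have hp := (Cm11_posSemidef hW hη).mul_mul_conjTranspose_same (x • B + Y)
    rw [conjTranspose_eq_transpose_of_trivial] at hp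
    have htr := hp.trace_nonneg
    have hBt : Bᵀ = B := B_transpose
    have e : ((x • B + Y) * Cm11 W η * (x • B + Y)ᵀ).trace =
        x ^ 2 * (B * Cm11 W η).trace + 2 * x * (B * Cm01 W η).trace +
          (Y * Cm11 W η * Yᵀ).trace := by
      have e1 : (B * Cm11 W η * B).trace = (B * Cm11 W η).trace := by
        rw [Matrix.trace_mul_comm, ← Matrix.mul_assoc, B_mul_B ht]
      have e2 : (Y * Cm11 W η * B).trace = (B * Cm01 W η).trace := by
        rw [← hf, Matrix.trace_mul_comm]
      have e3 : (B * Cm11 W η * Yᵀ).trace = (B * Cm01 W η).trace := by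
        rw [← e2, ← Matrix.trace_transpose]
        simp only [Matrix.transpose_mul, Matrix.transpose_transpose, Cm11_symm hW, hBt,
          Matrix.mul_assoc]
      simp only [Matrix.transpose_add, Matrix.transpose_smul, hBt, Matrix.add_mul, Matrix.mul_add,
        Matrix.smul_mul, Matrix.mul_smul, Matrix.trace_add, Matrix.trace_smul, e1, e2, e3,
        smul_eq_mul]
      ring
    rw [e] at htr
    rw [hI, Matrix.trace_sub, cm00_eq, cm01_eq, cm11_eq, B_mul_of_J_mul (J_mul_Cm00 hW h1 η)]
    linarith
  have h := hq (-(cm01 W η) / cm11 W η)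
  by_cases hc : cm11 W η = 0
  · rw [hc] at h
    rw [qstar, hc]
    simpa using h
  · rw [qstar]
    refine h.trans (le_of_eq ?_)
    field_simp
    ring

/-- The symmetrization of a measure attains `q*`. -/
lemma symmetrize_info (ht : 2 ≤ t) (hW : W.PosSemidef) (h1 : W *ᵥ 1 = 0)
    (η : BlockArray a b t → ℝ) :
    ∃ H, IsGenInv (Cm11 W (symmetrize η)) H ∧
      InfoMat W (symmetrize η) H = (qstar W η / ((t : ℝ) - 1)) • Bmat (Fin t) := by
  have htr : (t : ℝ) - 1 ≠ 0 := by
    have : (2 : ℝ) ≤ t := by exact_mod_cast ht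
    linarith
  have ht0 : (t : ℝ) ≠ 0 := by positivity
  obtain ⟨α, α', h00⟩ := exists_of_invariant ht _ (symm_invariant η (Cs00 W) (Cs00_perm W))
  obtain ⟨β, β', h01⟩ := exists_of_invariant ht _ (symm_invariant η (Cs01 W) (Cs01_perm W))
  obtain ⟨γ, δ, h11⟩ := exists_of_invariant ht _ (symm_invariant η (Cs11 W) (Cs11_perm W))
  change Cm00 W (symmetrize η) = _ at h00
  change Cm01 W (symmetrize η) = _ at h01
  change Cm11 W (symmetrize η) = _ at h11
  have c00 : cm00 W η = α * ((t : ℝ) - 1) := by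
    rw [← trace_B_mul_comb ht α α', ← h00, ← cm00_eq]
    refine (symmetrize_sum η (cs00 W) fun σ s => ?_).symm
    rw [cs00, Cs00_perm, trace_B_submatrix, cs00]
  have c01 : cm01 W η = β * ((t : ℝ) - 1) := by
    rw [← trace_B_mul_comb ht β β', ← h01, ← cm01_eq]
    refine (symmetrize_sum η (cs01 W) fun σ s => ?_).symm
    rw [cs01, Cs01_perm, trace_B_submatrix, cs01]
  have c11 : cm11 W η = γ * ((t : ℝ) - 1) := by
    rw [← trace_B_mul_comb ht γ δ, ← h11, ← cm11_eq]
    refine (symmetrize_sum η (cs11 W) fun σ s => ?_).symm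
    rw [cs11, Cs11_perm, trace_B_submatrix, cs11]
  have hα := J_mul_Cm00 hW h1 (symmetrize η)
  rw [h00] at hα
  have hβ := J_mul_Cm01 hW h1 (symmetrize η)
  rw [h01] at hβ
  rw [J_mul_comb ht _ _ hα, zero_smul, add_zero] at h00
  rw [J_mul_comb ht _ _ hβ, zero_smul, add_zero] at h01
  refine ⟨γ⁻¹ • Bmat (Fin t) + (δ⁻¹ * ((t : ℝ) ^ 2)⁻¹) • Jmat (Fin t), ?_, ?_⟩
  · rw [IsGenInv, h11]
    simp only [Matrix.add_mul, Matrix.mul_add, Matrix.smul_mul, Matrix.mul_smul, B_mul_B ht,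
      B_mul_J ht, J_mul_B ht, J_mul_J, smul_zero, add_zero, zero_add, smul_smul]
    congr 2
    · rw [← mul_assoc]; exact mul_inv_mul_cancel γ
    · by_cases hδ : δ = 0
      · simp [hδ]
      · field_simp
  · rw [InfoMat, h00, h01]
    simp only [Matrix.add_mul, Matrix.mul_add, Matrix.smul_mul, Matrix.mul_smul, B_mul_B ht,
      B_mul_J ht, J_mul_B ht, smul_zero, add_zero, smul_smul, Matrix.transpose_smul,
      B_transpose, Matrix.zero_mul]
    rw [← sub_smul]
    congr 1
    rw [qstar, c00, c01, c11]
    by_cases hγ : γ = 0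
    · simp [hγ, htr]
    · field_simp

end W

/-! ### Criteria -/

/-- Minimum over permutations of a quadratic form. -/
noncomputable def phiMin (v : Fin t → ℝ) (C : Matrix (Fin t) (Fin t) ℝ) : ℝ :=
  Finset.univ.inf' Finset.univ_nonempty
    fun σ : Equiv.Perm (Fin t) => (v ∘ σ) ⬝ᵥ (C *ᵥ (v ∘ σ))

lemma phiMin_good (v : Fin t → ℝ) : GoodPhi t (phiMin v) := by
  refine ⟨?_, ?_, ?_⟩
  · intro A B _ _ α h0 h1
    refine Finset.le_inf' _ _ fun σ hσ => ?_
    have hA : phiMin v A ≤ (v ∘ σ) ⬝ᵥ (A *ᵥ (v ∘ σ)) := Finset.inf'_le _ hσ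
    have hB : phiMin v B ≤ (v ∘ σ) ⬝ᵥ (B *ᵥ (v ∘ σ)) := Finset.inf'_le _ hσ
    rw [Matrix.add_mulVec, Matrix.smul_mulVec, Matrix.smul_mulVec, dotProduct_add,
      dotProduct_smul, dotProduct_smul, smul_eq_mul, smul_eq_mul]
    have := mul_le_mul_of_nonneg_left hA h0
    have := mul_le_mul_of_nonneg_left hB (sub_nonneg.mpr h1)
    linarith
  · intro A B _ _ hAB
    refine Finset.le_inf' _ _ fun σ hσ => ?_
    have hA : phiMin v A ≤ (v ∘ σ) ⬝ᵥ (A *ᵥ (v ∘ σ)) := Finset.inf'_le _ hσ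
    have h := hAB.dotProduct_mulVec_nonneg (v ∘ σ)
    rw [Matrix.sub_mulVec, dotProduct_sub] at h
    simp only [star_trivial] at h
    linarith
  · have key : ∀ (τ : Equiv.Perm (Fin t)) (C : Matrix (Fin t) (Fin t) ℝ)
        (w : Fin t → ℝ), w ⬝ᵥ (C.submatrix τ τ *ᵥ w) =
          (w ∘ τ.symm) ⬝ᵥ (C *ᵥ (w ∘ τ.symm)) := by
      intro τ C w
      rw [Matrix.submatrix_mulVec_equiv, ← comp_equiv_symm_dotProduct]
    have le : ∀ (τ : Equiv.Perm (Fin t)) (C : Matrix (Fin t) (Fin t) ℝ),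
        phiMin v C ≤ phiMin v (C.submatrix τ τ) := by
      intro τ C
      refine Finset.le_inf' _ _ fun σ hσ => ?_
      rw [key]
      exact Finset.inf'_le (fun σ : Equiv.Perm (Fin t) => (v ∘ σ) ⬝ᵥ (C *ᵥ (v ∘ σ)))
        (Finset.mem_univ (σ * τ.symm))
    intro τ C
    refine le_antisymm ?_ (le τ C)
    have := le τ.symm (C.submatrix τ τ)
    simpa using this

lemma le_phiMin_smul_B (v : Fin t → ℝ) (c : ℝ) :
    v ⬝ᵥ ((c • Bmat (Fin t)) *ᵥ v) ≤ phiMin v (c • Bmat (Fin t)) := by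
  refine Finset.le_inf' _ _ fun σ _ => le_of_eq ?_
  have h : (c • Bmat (Fin t)) = (c • Bmat (Fin t)).submatrix σ.symm σ.symm := by
    rw [Matrix.submatrix_smul]; simp [B_submatrix]
  conv_lhs => rw [h]
  rw [Matrix.submatrix_mulVec_equiv, ← comp_equiv_symm_dotProduct]
  rfl

lemma goodPhi_avg {Φ : Matrix (Fin t) (Fin t) ℝ → ℝ} (hΦ : GoodPhi t Φ)
    (A : Matrix (Fin t) (Fin t) ℝ) (hA : A.IsSymm) :
    Φ A ≤ Φ (∑ σ : Equiv.Perm (Fin t),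
      ((Fintype.card (Equiv.Perm (Fin t)) : ℝ))⁻¹ • A.submatrix σ σ) := by
  have hc : ConcaveOn ℝ {M : Matrix (Fin t) (Fin t) ℝ | M.IsSymm} Φ := by
    refine ⟨?_, ?_⟩
    · intro x hx y hy a b _ _ _
      exact (Matrix.IsSymm.smul hx a).add (Matrix.IsSymm.smul hy b)
    · intro x hx y hy a b ha hb hab
      have := hΦ.1 x y hx hy a ha (by linarith)
      rw [show 1 - a = b by linarith] at this
      simpa using this
  have h := hc.le_map_sum (t := Finset.univ)
    (w := fun _ : Equiv.Perm (Fin t) => ((Fintype.card (Equiv.Perm (Fin t)) : ℝ))⁻¹)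
    (p := fun σ => A.submatrix σ σ) (fun _ _ => by positivity)
    (by rw [Finset.sum_const, Finset.card_univ, nsmul_eq_mul, mul_inv_cancel₀ card_perm_ne])
    (fun σ _ => hA.submatrix σ)
  refine le_trans (le_of_eq ?_) h
  simp only [hΦ.2.2, Finset.sum_const, Finset.card_univ, nsmul_eq_mul, smul_eq_mul]
  rw [← mul_assoc, mul_inv_cancel₀ card_perm_ne, one_mul]

end Helpers

/-- with `y*` the maximum of `q*` over all measures, a measure `ξ` is
universally optimal iff for every generalized inverse `G` of `C_{ξ11}` one has
`C_{ξ00} − C_{ξ01} G C_{ξ10} = y*·B_t/(t−1)`. -/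
theorem univOptimal_iff_infoMat_eq
    (a b t : ℕ) (ha : 2 ≤ a) (hab : a ≤ b) (hb : 3 ≤ b) (ht : 2 ≤ t)
    (Sig : Matrix (Plot a b) (Plot a b) ℝ) (hSig : Sig.PosDef)
    (ystar : ℝ)
    (hy : IsGreatest {y : ℝ | ∃ η : BlockArray a b t → ℝ,
            IsMeasure η ∧ qstar (Btilde Sig) η = y} ystar)
    (ξ : BlockArray a b t → ℝ) (hξ : IsMeasure ξ) :
    UnivOptimal (Btilde Sig) ξ ↔
      ∀ G : Matrix (Fin t) (Fin t) ℝ, IsGenInv (Cm11 (Btilde Sig) ξ) G →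
        InfoMat (Btilde Sig) ξ G = (ystar / ((t : ℝ) - 1)) • Bmat (Fin t) := by
  have ha0 : 0 < a := by omega
  have hb0 : 0 < b := by omega
  have hW := Btilde_posSemidef ha0 hb0 Sig hSig
  have h1 := Btilde_mulVec_one ha0 hb0 Sig hSig
  have htr : 0 < (t : ℝ) - 1 := by
    have : (2 : ℝ) ≤ t := by exact_mod_cast ht
    linarith
  have hBs : ∀ c : ℝ, (c • Bmat (Fin t)).IsSymm := fun c => by
    rw [Matrix.IsSymm, Matrix.transpose_smul, B_transpose]
  constructor
  · intro hopt G hG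
    obtain ⟨⟨η, hη, hηy⟩, hmax⟩ := hy
    obtain ⟨H, hH, hinfo⟩ := symmetrize_info ht hW h1 η
    rw [hηy] at hinfo
    have hsym := InfoMat_symm hW hξ hG
    have hpsd : (InfoMat (Btilde Sig) ξ G - (ystar / ((t : ℝ) - 1)) • Bmat (Fin t)).PosSemidef := by
      refine Matrix.PosSemidef.of_dotProduct_mulVec_nonneg ?_ fun v => ?_
      · rw [Matrix.IsHermitian, conjTranspose_eq_transpose_of_trivial]
        exact hsym.sub (hBs _)
      · have h := hopt _ (symmetrize_isMeasure hη) G H hG hH _ (phiMin_good v)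
        rw [hinfo] at h
        have h2 := le_phiMin_smul_B v (ystar / ((t : ℝ) - 1))
        have h3 : phiMin v (InfoMat (Btilde Sig) ξ G) ≤
            v ⬝ᵥ (InfoMat (Btilde Sig) ξ G *ᵥ v) :=
          Finset.inf'_le (fun σ : Equiv.Perm (Fin t) =>
            (v ∘ σ) ⬝ᵥ (InfoMat (Btilde Sig) ξ G *ᵥ (v ∘ σ))) (Finset.mem_univ 1)
        rw [Matrix.sub_mulVec, dotProduct_sub, star_trivial]
        linarith
    have hle := (trace_InfoMat_le ht hW h1 hξ hG).trans (hmax ⟨ξ, hξ, rfl⟩)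
    have h0 : (InfoMat (Btilde Sig) ξ G - (ystar / ((t : ℝ) - 1)) • Bmat (Fin t)).trace = 0 := by
      refine le_antisymm ?_ hpsd.trace_nonneg
      rw [Matrix.trace_sub, Matrix.trace_smul, B_trace ht, smul_eq_mul,
        div_mul_cancel₀ _ htr.ne']
      linarith
    exact sub_eq_zero.mp (hpsd.trace_eq_zero_iff.mp h0)
  · intro hinfo η hη G H hG hH Φ hΦ
    rw [hinfo G hG]
    have h := goodPhi_avg hΦ _ (InfoMat_symm hW hη hH)
    rw [sum_submatrix_comb ht _ (J_mul_InfoMat hW h1 η H)] at h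
    refine h.trans (hΦ.2.1 _ _ (hBs _) (hBs _) ?_)
    rw [← sub_smul]
    refine (B_posSemidef ht).smul ?_
    rw [← sub_div]
    refine div_nonneg (sub_nonneg.mpr ?_) htr.le
    exact (trace_InfoMat_le ht hW h1 hη hH).trans (hy.2 ⟨η, hη, rfl⟩)

end TwoDim
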